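/- For every n ≥ 1, the number of conjugacy classes of torsion-free genus-zero subgroups of PSL(2,ℤ) of index n equals the number of equivalence classes, up to simultaneous conjugation, of pairs (σ, α) of permutations of an n-element set such that σ³ = id, α² = id, σ and α have no fixed points, the subgroup generated by σ and α acts transitively, and (number of cycles of σ) + (number of cycles of α) + (number of cycles of σ·α) = n + 2. -/

import Mathlib

open Matrix

/-- `SL(2,ℤ)`: the group of 2×2 integer matrices of determinant 1. -/
abbrev SL2Z := Matrix.SpecialLinearGroup (Fin 2) ℤ

instance : Fact (Even (Fintype.card (Fin 2))) := ⟨by simp⟩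

/-- The subgroup `{±I}` of `SL(2,ℤ)`. -/
def pmOne : Subgroup SL2Z := Subgroup.zpowers (-1 : SL2Z)

instance : pmOne.Normal := by
  constructor
  intro x hx g
  obtain ⟨n, rfl⟩ := hx
  have h : Commute ((-1 : SL2Z) ^ n) g := (Commute.neg_one_left g).zpow_left n
  refine ⟨n, ?_⟩
  rw [← h.eq, mul_assoc, mul_inv_cancel, mul_one]

/-- `PSL(2,ℤ)`, the modular group, as the quotient of `SL(2,ℤ)` by `{±I}`. -/
abbrev PSL2Z := SL2Z ⧸ pmOne

/-- The natural projection `ξ : SL(2,ℤ) → PSL(2,ℤ)`. -/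
def xi : SL2Z →* PSL2Z := QuotientGroup.mk' pmOne

/-- The element `S` of `PSL(2,ℤ)`, the image of `[[0,-1],[1,0]]`. -/
def Sp : PSL2Z := xi ⟨!![0, -1; 1, 0], by norm_num [Matrix.det_fin_two_of]⟩

/-- The element `T` of `PSL(2,ℤ)`, the image of `[[1,1],[0,1]]`. -/
def Tp : PSL2Z := xi ⟨!![1, 1; 0, 1], by norm_num [Matrix.det_fin_two_of]⟩

/-- The number of left cosets in `PSL(2,ℤ)/Γ` fixed by `g` (for the
left-multiplication action).  For `g = S` this is `e₂(Γ)`, for `g = S*T` it is `e₃(Γ)`. -/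
noncomputable def nFix (g : PSL2Z) (Γ : Subgroup PSL2Z) : ℕ :=
  Nat.card {x : PSL2Z ⧸ Γ // g • x = x}

/-- The number of orbits of the cyclic subgroup generated by `g` on `PSL(2,ℤ)/Γ`.
For `g = S, S*T, T` these are `c₂(Γ), c₃(Γ), h(Γ)` respectively. -/
noncomputable def nOrb (g : PSL2Z) (Γ : Subgroup PSL2Z) : ℕ :=
  Nat.card (MulAction.orbitRel.Quotient (Subgroup.zpowers g) (PSL2Z ⧸ Γ))

/-- `Γ` has genus zero: `c₂(Γ) + c₃(Γ) + h(Γ) = index(Γ) + 2`. -/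
def GenusZero (Γ : Subgroup PSL2Z) : Prop :=
  nOrb Sp Γ + nOrb (Sp * Tp) Γ + nOrb Tp Γ = Γ.index + 2

/-- `Γ` is torsion free: it contains no nontrivial element of finite order. -/
def TorsionFree (Γ : Subgroup PSL2Z) : Prop :=
  ∀ x ∈ Γ, x ≠ 1 → ¬ IsOfFinOrder x

/-- Two subgroups of a group are conjugate. -/
def SubgroupConj {G : Type*} [Group G] (H K : Subgroup G) : Prop :=
  ∃ g : G, Subgroup.map (MulAut.conj g).toMonoidHom H = K

/-- The number of conjugacy classes of subgroups of `PSL(2,ℤ)` satisfying `P`. -/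
noncomputable def countClasses (P : Subgroup PSL2Z → Prop) : ℕ :=
  Nat.card (Quot fun A B : {Γ : Subgroup PSL2Z // P Γ} => SubgroupConj A.1 B.1)

/-- The index of the torsion free subgroup `Γ^tf` associated to `Γ`:
`index(Γ) + 3·e₂(Γ) + 2·e₃(Γ)`. -/
noncomputable def tfIdx (Γ : Subgroup PSL2Z) : ℕ :=
  Γ.index + 3 * nFix Sp Γ + 2 * nFix (Sp * Tp) Γ

/-- A hypermap of size `n`: permutations `σ, α` of an `n`-element set with
`σ³ = 1`, `α² = 1`, generating a transitive subgroup. -/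
structure Hypermap (n : ℕ) where
  sigma : Equiv.Perm (Fin n)
  alpha : Equiv.Perm (Fin n)
  sigma_cube : sigma ^ 3 = 1
  alpha_sq : alpha ^ 2 = 1
  trans : ∀ x y : Fin n, ∃ g ∈ Subgroup.closure ({sigma, alpha} : Set (Equiv.Perm (Fin n))), g x = y

/-- Equivalence of hypermaps: simultaneous conjugation. -/
def HypermapEquiv {n : ℕ} (M N : Hypermap n) : Prop :=
  ∃ ψ : Equiv.Perm (Fin n),
    (∀ x, ψ (M.sigma x) = N.sigma (ψ x)) ∧
    (∀ x, ψ (M.alpha x) = N.alpha (ψ x))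

/-- The number of cycles (including fixed points) of a permutation of `Fin n`,
i.e. the number of orbits of the cyclic group it generates. -/
noncomputable def permCycles {n : ℕ} (σ : Equiv.Perm (Fin n)) : ℕ :=
  Nat.card (MulAction.orbitRel.Quotient (Subgroup.zpowers σ) (Fin n))

section Abstract
variable {H : Type*} [Group H]

/-- Product of a word in the two elements `s*u` and `s*u⁻¹`. -/
def lrVal (s u : H) (l : List Bool) : H :=
  (l.map (fun b => if b then s * u else s * u⁻¹)).prod

/-- The conjugacy normal forms in a group generated by `s` (order 2) and `u` (order 3). -/
def GoodForm (s u y : H) : Prop :=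
  y = 1 ∨ y = s ∨ y = u ∨ y = u⁻¹ ∨ ∃ l : List Bool, l ≠ [] ∧ y = lrVal s u l

def ConjGood (s u x : H) : Prop := ∃ g : H, GoodForm s u (g * x * g⁻¹)

lemma ConjGood.of_good {s u x : H} (h : GoodForm s u x) : ConjGood s u x :=
  ⟨1, by simpa using h⟩

lemma ConjGood.conj {s u x : H} (g : H) (h : ConjGood s u (g * x * g⁻¹)) : ConjGood s u x := by
  obtain ⟨k, hk⟩ := h
  refine ⟨k * g, ?_⟩
  have : k * g * x * (k * g)⁻¹ = k * (g * x * g⁻¹) * k⁻¹ := by group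
  rw [this]; exact hk

lemma ConjGood.comm {s u x y : H} (h : ConjGood s u (y * x)) : ConjGood s u (x * y) := by
  refine ConjGood.conj x⁻¹ ?_
  have : x⁻¹ * (x * y) * x⁻¹⁻¹ = y * x := by group
  rwa [this]

lemma lrVal_nil (s u : H) : lrVal s u [] = 1 := rfl
lemma lrVal_cons (s u : H) (b : Bool) (l : List Bool) :
    lrVal s u (b :: l) = s * (if b then u else u⁻¹) * lrVal s u l := by
  cases b <;> simp [lrVal]
lemma lrVal_concat (s u : H) (b : Bool) (l : List Bool) :
    lrVal s u (l ++ [b]) = lrVal s u l * (s * (if b then u else u⁻¹)) := by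
  cases b <;> simp [lrVal]

lemma lr_good (s u : H) (l : List Bool) : ConjGood s u (lrVal s u l) := by
  apply ConjGood.of_good
  rcases l with _ | ⟨b, l⟩
  · left; rfl
  · right; right; right; right; exact ⟨_, by simp, rfl⟩

lemma uu {u : H} (hu : u ^ 3 = 1) : u * u = u⁻¹ :=
  eq_inv_of_mul_eq_one_left (by rw [← hu, pow_succ, pow_two])
lemma uiui {u : H} (hu : u ^ 3 = 1) : u⁻¹ * u⁻¹ = u := by
  rw [← _root_.mul_inv_rev, uu hu, inv_inv]

lemma lr_all {s u : H} (hs : s * s = 1) (hu : u ^ 3 = 1) (n : ℕ) : ∀ l : List Bool, l.length = n →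
    ConjGood s u (lrVal s u l * s) ∧ ConjGood s u (lrVal s u l * u) ∧
      ConjGood s u (lrVal s u l * u⁻¹) := by
  induction n with
  | zero =>
    intro l hl
    obtain rfl := List.length_eq_zero_iff.1 hl
    simp only [lrVal_nil, one_mul]
    refine ⟨.of_good ?_, .of_good ?_, .of_good ?_⟩ <;> simp [GoodForm]
  | succ n ih =>
    intro l hl
    refine ⟨?_, ?_⟩
    · rcases l with _ | ⟨b, l⟩
      · simp at hl
      · have h := ih l (by simpa using hl)
        rw [lrVal_cons]
        apply ConjGood.comm
        rw [mul_assoc, ← mul_assoc, hs, one_mul]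
        apply ConjGood.comm
        cases b
        · simpa using h.2.2
        · simpa using h.2.1
    · rcases List.eq_nil_or_concat l with rfl | ⟨l, b, rfl⟩
      · simp at hl
      · rw [List.concat_eq_append] at *
        have h := ih l (by simpa using hl)
        rw [lrVal_concat]
        cases b
        · refine ⟨?_, ?_⟩
          · simpa [mul_assoc] using h.1
          · have := lr_good s u (l ++ [true])
            rw [lrVal_concat] at this
            simpa [mul_assoc, uiui hu] using this
        · refine ⟨?_, ?_⟩
          · have := lr_good s u (l ++ [false])
            rw [lrVal_concat] at this
            simpa [mul_assoc, uu hu] using this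
          · simpa [mul_assoc] using h.1

/-- Every element is `a * w * b`. -/
def IsABW (s u x : H) : Prop :=
  ∃ a b l, (a = 1 ∨ a = u ∨ a = u⁻¹) ∧ (b = 1 ∨ b = s) ∧ x = a * lrVal s u l * b

lemma IsABW.mul_s {s u x : H} (hs : s * s = 1) (h : IsABW s u x) : IsABW s u (x * s) := by
  obtain ⟨a, b, l, ha, rfl | rfl, rfl⟩ := h
  · exact ⟨a, s, l, ha, .inr rfl, by simp⟩
  · exact ⟨a, 1, l, ha, .inl rfl, by simp [mul_assoc, hs]⟩

lemma IsABW.mul_u {s u x : H} (hu : u ^ 3 = 1) (h : IsABW s u x) : IsABW s u (x * u) := by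
  obtain ⟨a, b, l, ha, rfl | rfl, rfl⟩ := h
  · rcases List.eq_nil_or_concat l with rfl | ⟨l, b, rfl⟩
    · refine ⟨a * u, 1, [], ?_, .inl rfl, by simp [lrVal_nil]⟩
      rcases ha with rfl | rfl | rfl <;> simp [uu hu]
    · rw [List.concat_eq_append, lrVal_concat]
      cases b
      · exact ⟨a, s, l, ha, .inr rfl, by simp [mul_assoc]⟩
      · exact ⟨a, 1, l ++ [false], ha, .inl rfl, by simp [mul_assoc, lrVal_concat, uu hu]⟩
  · exact ⟨a, 1, l ++ [true], ha, .inl rfl, by simp [mul_assoc, lrVal_concat]⟩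

lemma IsABW.all {s u : H} (hs : s * s = 1) (hu : u ^ 3 = 1)
    (hg : Subgroup.closure {s, u} = ⊤) (x : H) : IsABW s u x := by
  have hx : x ∈ Subgroup.closure {s, u} := hg ▸ Subgroup.mem_top x
  induction hx using Subgroup.closure_induction_right with
  | one => exact ⟨1, 1, [], .inl rfl, .inl rfl, by simp [lrVal_nil]⟩
  | mul_right x y hy z ih =>
    rcases z with rfl | rfl
    · exact ih.mul_s hs
    · exact ih.mul_u hu
  | mul_inv_cancel x y hy z ih =>
    rcases z with rfl | rfl
    · rw [inv_eq_of_mul_eq_one_left hs]; exact ih.mul_s hs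
    · rw [← uu hu, ← mul_assoc]; exact (ih.mul_u hu).mul_u hu

lemma conjGood_all {s u : H} (hs : s * s = 1) (hu : u ^ 3 = 1)
    (hg : Subgroup.closure {s, u} = ⊤) (x : H) : ConjGood s u x := by
  obtain ⟨a, b, l, ha, hb, rfl⟩ := IsABW.all hs hu hg x
  rw [mul_assoc]
  apply ConjGood.comm
  have h := lr_all hs hu _ l rfl
  rcases hb with rfl | rfl <;> rcases ha with rfl | rfl | rfl
  · simpa using lr_good s u l
  · simpa using h.2.1
  · simpa using h.2.2
  · simpa using h.1
  · simpa [lrVal_concat, mul_assoc] using lr_good _ _ (l ++ [true])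
  · simpa [lrVal_concat, mul_assoc] using lr_good _ _ (l ++ [false])

end Abstract

/-! Facts about the modular group -/

/-- `S * T`. -/
def Up : PSL2Z := Sp * Tp

lemma xi_eq_one {A : SL2Z} : xi A = 1 ↔ A = 1 ∨ A = -1 := by
  have : xi A = 1 ↔ A ∈ pmOne := QuotientGroup.eq_one_iff A
  rw [this, pmOne, Subgroup.mem_zpowers_iff]
  constructor
  · rintro ⟨k, rfl⟩
    rcases Int.even_or_odd k with h | h
    · left; exact h.neg_one_zpow
    · right; exact h.neg_one_zpow
  · rintro (rfl | rfl)
    · exact ⟨0, by simp⟩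
    · exact ⟨1, by simp⟩

lemma xi_neg (A : SL2Z) : xi (-A) = xi A := by
  rw [← neg_one_mul, map_mul, xi_eq_one.2 (.inr rfl), one_mul]

lemma Sp_eq : Sp = xi ModularGroup.S := rfl
lemma Tp_eq : Tp = xi ModularGroup.T := rfl

lemma Sp_sq : Sp * Sp = 1 := by
  rw [Sp_eq, ← map_mul, xi_eq_one]
  right; decide

lemma Up_cube : Up ^ 3 = 1 := by
  rw [Up, Sp_eq, Tp_eq, ← map_mul, ← map_pow, xi_eq_one]
  right; decide

lemma Sp_ne : Sp ≠ 1 := by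
  rw [Sp_eq, Ne, xi_eq_one]
  decide

lemma Up_ne : Up ≠ 1 := by
  rw [Up, Sp_eq, Tp_eq, ← map_mul, Ne, xi_eq_one]
  decide

/-- Nontrivial nonnegative matrices. -/
def PosM (A : SL2Z) : Prop := 1 ≤ A.1 0 0 ∧ 1 ≤ A.1 1 1 ∧ 0 ≤ A.1 0 1 ∧ 0 ≤ A.1 1 0 ∧
  1 ≤ A.1 0 1 + A.1 1 0

lemma PosM.mul {A B : SL2Z} (hA : PosM A) (hB : PosM B) : PosM (A * B) := by
  obtain ⟨a, b, c, d, e⟩ := hA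
  obtain ⟨a', b', c', d', e'⟩ := hB
  have key : ∀ i j, (A * B).1 i j = A.1 i 0 * B.1 0 j + A.1 i 1 * B.1 1 j := by
    intro i j
    change (A.1 * B.1) i j = _
    rw [Matrix.mul_apply, Fin.sum_univ_two]
  simp only [PosM, key]
  refine ⟨?_, ?_, ?_, ?_, ?_⟩ <;> nlinarith [mul_nonneg c d', mul_nonneg c' d, mul_nonneg c c', mul_nonneg d d']

def PosP (x : PSL2Z) : Prop := ∃ A, PosM A ∧ xi A = x

lemma PosP.mul {x y : PSL2Z} (hx : PosP x) (hy : PosP y) : PosP (x * y) := by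
  obtain ⟨A, hA, rfl⟩ := hx
  obtain ⟨B, hB, rfl⟩ := hy
  exact ⟨A * B, hA.mul hB, map_mul _ _ _⟩

lemma PosP.ne_one {x : PSL2Z} (hx : PosP x) : x ≠ 1 := by
  obtain ⟨A, hA, rfl⟩ := hx
  rw [Ne, xi_eq_one]
  rintro (rfl | rfl) <;> simp [PosM] at hA

lemma PosP.pow {x : PSL2Z} (hx : PosP x) (n : ℕ) : PosP (x ^ (n + 1)) := by
  induction n with
  | zero => simpa using hx
  | succ n ih => rw [pow_succ]; exact ih.mul hx

lemma PosP.not_fin {x : PSL2Z} (hx : PosP x) : ¬ IsOfFinOrder x := by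
  rw [isOfFinOrder_iff_pow_eq_one]
  rintro ⟨n, hn, h⟩
  obtain ⟨m, rfl⟩ := Nat.exists_eq_succ_of_ne_zero hn.ne'
  exact (hx.pow m).ne_one h

lemma Sp_mul_Up : Sp * Up = Tp := by rw [Up, ← mul_assoc, Sp_sq, one_mul]

lemma posP_b (b : Bool) : PosP (Sp * (if b then Up else Up⁻¹)) := by
  cases b
  · refine ⟨ModularGroup.S * ModularGroup.T⁻¹ * ModularGroup.S⁻¹, by unfold PosM; decide, ?_⟩
    simp only [Bool.false_eq_true, if_false, Up, Sp_eq, Tp_eq, map_mul, map_inv]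
    group
  · simp only [if_true, Sp_mul_Up]
    exact ⟨_, by simp [PosM], rfl⟩

lemma posP_lr (l : List Bool) (hl : l ≠ []) : PosP (lrVal Sp Up l) := by
  induction l with
  | nil => exact absurd rfl hl
  | cons b l ih =>
    rw [lrVal_cons]
    by_cases h : l = []
    · subst h; simpa [lrVal_nil] using posP_b b
    · exact (posP_b b).mul (ih h)

lemma gen_top : Subgroup.closure {Sp, Up} = (⊤ : Subgroup PSL2Z) := by
  have h := SpecialLinearGroup.SL2Z_generators
  have hs : Function.Surjective xi := QuotientGroup.mk'_surjective _
  have h2 := congrArg (Subgroup.map xi) h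
  rw [MonoidHom.map_closure, Subgroup.map_top_of_surjective _ hs] at h2
  rw [eq_top_iff, ← h2, Subgroup.closure_le]
  have hS : Sp ∈ Subgroup.closure {Sp, Up} := Subgroup.subset_closure (by simp)
  have hU : Up ∈ Subgroup.closure {Sp, Up} := Subgroup.subset_closure (by simp)
  rintro _ ⟨x, rfl | rfl, rfl⟩
  · exact hS
  · have : xi ModularGroup.T = Tp := rfl
    rw [this, ← Sp_mul_Up]
    exact mul_mem hS hU

/-- relators for `ℤ/2 * ℤ/3` -/
def modRels : Set (FreeGroup Bool) := {FreeGroup.of true * FreeGroup.of true, FreeGroup.of false ^ 3}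

def modGen {H : Type*} (s u : H) : Bool → H := fun b => if b then s else u

lemma modRels_ok {H : Type*} [Group H] {s u : H} (hs : s * s = 1) (hu : u ^ 3 = 1) :
    ∀ r ∈ modRels, FreeGroup.lift (modGen s u) r = 1 := by
  rintro r (rfl | rfl) <;> simp [modGen, hs, hu]

lemma exists_iso : ∃ e : PresentedGroup modRels ≃* PSL2Z,
    e (PresentedGroup.of true) = Sp ∧ e (PresentedGroup.of false) = Up := by
  let f : PresentedGroup modRels →* PSL2Z := PresentedGroup.toGroup (modRels_ok Sp_sq Up_cube)
  have f1 : f (PresentedGroup.of true) = Sp := by simp [f, modGen]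
  have f2 : f (PresentedGroup.of false) = Up := by simp [f, modGen]
  have p1 : (PresentedGroup.of true : PresentedGroup modRels) * PresentedGroup.of true = 1 :=
    (PresentedGroup.one_of_mem (rels := modRels) (x := FreeGroup.of true * FreeGroup.of true)
      (by simp [modRels]))
  have p2 : (PresentedGroup.of false : PresentedGroup modRels) ^ 3 = 1 :=
    (PresentedGroup.one_of_mem (rels := modRels) (x := FreeGroup.of false ^ 3)
      (by simp [modRels]))
  have p3 : Subgroup.closure {(PresentedGroup.of true : PresentedGroup modRels),
      PresentedGroup.of false} = ⊤ := by
    rw [← PresentedGroup.closure_range_of modRels]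
    congr 1
    ext x; simp [or_comm]
  have hinj : Function.Injective f := by
    rw [injective_iff_map_eq_one]
    intro x hx
    obtain ⟨g, hg⟩ := conjGood_all p1 p2 p3 x
    have h1 : f (g * x * g⁻¹) = 1 := by simp [hx]
    have hne : ∀ l : List Bool, f (lrVal (PresentedGroup.of true) (PresentedGroup.of false) l)
        = lrVal Sp Up l := by
      intro l
      induction l with
      | nil => simp [lrVal_nil]
      | cons b l ih => rw [lrVal_cons, lrVal_cons, map_mul, ih]; cases b <;> simp [f1, f2]
    rcases hg with h | h | h | h | ⟨l, hl, h⟩ 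
    · simpa using h
    · rw [h, f1] at h1; exact absurd h1 Sp_ne
    · rw [h, f2] at h1; exact absurd h1 Up_ne
    · rw [h, map_inv, f2, inv_eq_one] at h1; exact absurd h1 Up_ne
    · rw [h, hne] at h1; exact absurd h1 (posP_lr l hl).ne_one
  have hsurj : Function.Surjective f := by
    rw [← MonoidHom.range_eq_top, eq_top_iff, ← gen_top, Subgroup.closure_le]
    rintro _ (rfl | rfl)
    exacts [⟨_, f1⟩, ⟨_, f2⟩]
  exact ⟨MulEquiv.ofBijective f ⟨hinj, hsurj⟩, f1, f2⟩

lemma exists_hom {H : Type*} [Group H] {s u : H} (hs : s * s = 1) (hu : u ^ 3 = 1) :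
    ∃ φ : PSL2Z →* H, φ Sp = s ∧ φ Up = u := by
  obtain ⟨e, h1, h2⟩ := exists_iso
  refine ⟨(PresentedGroup.toGroup (modRels_ok hs hu)).comp e.symm.toMonoidHom, ?_, ?_⟩
  · rw [← h1]; simp [modGen]
  · rw [← h2]; simp [modGen]

lemma fix_iff (Γ : Subgroup PSL2Z) (a g : PSL2Z) :
    a • (g : PSL2Z ⧸ Γ) = (g : PSL2Z ⧸ Γ) ↔ g⁻¹ * a * g ∈ Γ := by
  have h1 : a • (g : PSL2Z ⧸ Γ) = ((a * g : PSL2Z) : PSL2Z ⧸ Γ) := rfl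
  rw [h1, eq_comm, QuotientGroup.eq, mul_assoc]

lemma tf_no_fix {Γ : Subgroup PSL2Z} (h : TorsionFree Γ) {a : PSL2Z} (ha : a ≠ 1)
    (hf : IsOfFinOrder a) (x : PSL2Z ⧸ Γ) : a • x ≠ x := by
  obtain ⟨g, rfl⟩ := QuotientGroup.mk_surjective x
  intro hx
  rw [fix_iff] at hx
  refine h _ hx ?_ ?_
  · intro h1
    apply ha
    have : a = g * (g⁻¹ * a * g) * g⁻¹ := by group
    rw [this, h1]; simp
  · rw [isOfFinOrder_iff_pow_eq_one] at hf ⊢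
    obtain ⟨n, hn, h1⟩ := hf
    refine ⟨n, hn, ?_⟩
    have := conj_pow (i := n) (a := g⁻¹) (b := a)
    rw [inv_inv] at this
    rw [this, h1]; simp

lemma tf_iff (Γ : Subgroup PSL2Z) : TorsionFree Γ ↔
    (∀ x : PSL2Z ⧸ Γ, Up • x ≠ x) ∧ (∀ x : PSL2Z ⧸ Γ, Sp • x ≠ x) := by
  constructor
  · intro h
    refine ⟨tf_no_fix h Up_ne ?_, tf_no_fix h Sp_ne ?_⟩
    · exact isOfFinOrder_iff_pow_eq_one.2 ⟨3, by norm_num, Up_cube⟩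
    · exact isOfFinOrder_iff_pow_eq_one.2 ⟨2, by norm_num, by rw [pow_two, Sp_sq]⟩
  · rintro ⟨hU, hS⟩ x hx hne hfin
    obtain ⟨g, hg⟩ := conjGood_all Sp_sq Up_cube gen_top x
    have key : ∀ a, g * x * g⁻¹ = a → a • (g : PSL2Z ⧸ Γ) = (g : PSL2Z ⧸ Γ) := by
      rintro a rfl
      rw [fix_iff]
      have : g⁻¹ * (g * x * g⁻¹) * g = x := by group
      rwa [this]
    rcases hg with h | h | h | h | ⟨l, hl, h⟩
    · exact hne (by simpa using h)
    · exact hS _ (key _ h)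
    · exact hU _ (key _ h)
    · refine hU (g : PSL2Z ⧸ Γ) ?_
      have := key _ h
      rw [inv_smul_eq_iff] at this
      exact this.symm
    · apply (posP_lr l hl).not_fin
      rw [← h]
      rw [isOfFinOrder_iff_pow_eq_one] at hfin ⊢
      obtain ⟨n, hn, h1⟩ := hfin
      exact ⟨n, hn, by rw [conj_pow, h1]; simp⟩

lemma card_orb_congr {A B X Y : Type*} [Group A] [Group B] [MulAction A X] [MulAction B Y]
    (a : A) (b : B) (e : X ≃ Y) (h : ∀ x, e (a • x) = b • e x) :
    Nat.card (MulAction.orbitRel.Quotient (Subgroup.zpowers a) X) =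
    Nat.card (MulAction.orbitRel.Quotient (Subgroup.zpowers b) Y) := by
  have hz : ∀ (k : ℤ) x, e (a ^ k • x) = b ^ k • e x := by
    intro k
    induction k using Int.induction_on with
    | zero => simp
    | succ k ih => intro x; rw [_root_.zpow_add_one, _root_.zpow_add_one, mul_smul, mul_smul, ih, h]
    | pred k ih =>
      intro x
      rw [_root_.zpow_sub_one, _root_.zpow_sub_one, mul_smul, mul_smul, ih]
      congr 1
      rw [eq_inv_smul_iff, ← h, smul_inv_smul]
  refine Nat.card_congr (Quotient.congr e ?_)
  intro x y
  change x ∈ MulAction.orbit _ y ↔ e x ∈ MulAction.orbit _ (e y)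
  simp only [MulAction.mem_orbit_iff, Subtype.exists, Subgroup.mem_zpowers_iff]
  constructor
  · rintro ⟨_, ⟨k, rfl⟩, hk⟩
    refine ⟨_, ⟨k, rfl⟩, ?_⟩
    change a ^ k • y = x at hk
    change b ^ k • e y = e x
    rw [← hz, hk]
  · rintro ⟨_, ⟨k, rfl⟩, hk⟩
    refine ⟨_, ⟨k, rfl⟩, ?_⟩
    change b ^ k • e y = e x at hk
    change a ^ k • y = x
    exact e.injective (by rw [hz, hk])

/-- `Γ` and `M` correspond to each other. -/
def Compat {n : ℕ} (M : Hypermap n) (Γ : Subgroup PSL2Z) : Prop :=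
  ∃ e : PSL2Z ⧸ Γ ≃ Fin n, (∀ x, e (Up • x) = M.sigma (e x)) ∧ (∀ x, e (Sp • x) = M.alpha (e x))

lemma Compat.index {n : ℕ} {M : Hypermap n} {Γ : Subgroup PSL2Z} (h : Compat M Γ) :
    Γ.index = n := by
  obtain ⟨e, -⟩ := h
  rw [Subgroup.index, Nat.card_congr e]; simp

lemma Compat.tf {n : ℕ} {M : Hypermap n} {Γ : Subgroup PSL2Z} (h : Compat M Γ) :
    TorsionFree Γ ↔ (∀ x, M.sigma x ≠ x) ∧ (∀ x, M.alpha x ≠ x) := by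
  obtain ⟨e, h1, h2⟩ := h
  rw [tf_iff, e.surjective.forall, e.surjective.forall]
  simp only [← h1, ← h2, ne_eq, e.injective.eq_iff]

lemma Compat.genus {n : ℕ} {M : Hypermap n} {Γ : Subgroup PSL2Z} (h : Compat M Γ) :
    GenusZero Γ ↔
      permCycles M.sigma + permCycles M.alpha + permCycles (M.sigma * M.alpha) = n + 2 := by
  have hi := h.index
  obtain ⟨e, h1, h2⟩ := h
  have a1 : nOrb (Sp * Tp) Γ = permCycles M.sigma := card_orb_congr _ _ e h1
  have a2 : nOrb Sp Γ = permCycles M.alpha := card_orb_congr _ _ e h2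
  have a3 : nOrb Tp Γ = permCycles (M.sigma * M.alpha) := by
    refine card_orb_congr _ _ ((MulAction.toPerm Sp).trans e) ?_
    intro x
    change e (Sp • Tp • x) = M.sigma (M.alpha (e (Sp • x)))
    rw [← h2, ← h1, smul_smul, smul_smul, smul_smul, ← Sp_mul_Up, ← mul_assoc, Sp_sq, mul_assoc Up,
      Sp_sq, one_mul, mul_one]
  rw [GenusZero, a1, a2, a3, hi, add_comm (permCycles M.alpha)]

lemma exists_compat_of_hypermap {n : ℕ} (hn : 1 ≤ n) (M : Hypermap n) : ∃ Γ, Compat M Γ := by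
  obtain ⟨φ, hs, hu⟩ := exists_hom (s := M.alpha) (u := M.sigma)
    (by rw [← pow_two]; exact M.alpha_sq) M.sigma_cube
  let o : Fin n := ⟨0, hn⟩
  let Γ : Subgroup PSL2Z := (MulAction.stabilizer (Equiv.Perm (Fin n)) o).comap φ
  have hmem : ∀ a b : PSL2Z, a⁻¹ * b ∈ Γ ↔ φ a o = φ b o := by
    intro a b
    rw [Subgroup.mem_comap, MulAction.mem_stabilizer_iff, map_mul, map_inv, mul_smul,
      inv_smul_eq_iff]
    exact eq_comm
  let f : PSL2Z ⧸ Γ → Fin n := Quotient.lift (fun g => φ g o) (by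
    intro a b hab
    exact (hmem a b).1 (QuotientGroup.leftRel_apply.1 hab))
  have hf : ∀ g : PSL2Z, f (g : PSL2Z ⧸ Γ) = φ g o := fun g => rfl
  have hinj : Function.Injective f := by
    intro x y
    obtain ⟨a, rfl⟩ := QuotientGroup.mk_surjective x
    obtain ⟨b, rfl⟩ := QuotientGroup.mk_surjective y
    rw [hf, hf, ← hmem, QuotientGroup.eq]
    exact id
  have hsurj : Function.Surjective f := by
    intro y
    obtain ⟨g, hg, rfl⟩ := M.trans o y
    have : Subgroup.closure {M.sigma, M.alpha} ≤ φ.range := by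
      rw [Subgroup.closure_le]
      rintro _ (rfl | rfl)
      exacts [⟨_, hu⟩, ⟨_, hs⟩]
    obtain ⟨x, rfl⟩ := this hg
    exact ⟨x, rfl⟩
  have hact : ∀ (a : PSL2Z) (x : PSL2Z ⧸ Γ), f (a • x) = φ a (f x) := by
    intro a x
    obtain ⟨b, rfl⟩ := QuotientGroup.mk_surjective x
    change φ (a * b) o = φ a (φ b o)
    rw [map_mul]; rfl
  exact ⟨Γ, Equiv.ofBijective f ⟨hinj, hsurj⟩, fun x => by rw [← hu]; exact hact _ _,
    fun x => by rw [← hs]; exact hact _ _⟩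

lemma exists_compat_of_subgroup {n : ℕ} (hn : 1 ≤ n) (Γ : Subgroup PSL2Z) (hi : Γ.index = n) :
    ∃ M : Hypermap n, Compat M Γ := by
  have hc : Nat.card (PSL2Z ⧸ Γ) = n := hi
  have : Finite (PSL2Z ⧸ Γ) := Nat.finite_of_card_ne_zero (by omega)
  let e : PSL2Z ⧸ Γ ≃ Fin n := Finite.equivFinOfCardEq hc
  let Φ : PSL2Z →* Equiv.Perm (Fin n) :=
    e.permCongrHom.toMonoidHom.comp (MulAction.toPermHom PSL2Z (PSL2Z ⧸ Γ))
  have hΦ : ∀ a x, Φ a (e x) = e (a • x) := by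
    intro a x
    simp [Φ]
  refine ⟨⟨Φ Up, Φ Sp, ?_, ?_, ?_⟩, e, fun x => (hΦ _ _).symm, fun x => (hΦ _ _).symm⟩
  · rw [← map_pow, Up_cube, map_one]
  · rw [← map_pow, pow_two, Sp_sq, map_one]
  · intro x y
    obtain ⟨x, rfl⟩ := e.surjective x
    obtain ⟨y, rfl⟩ := e.surjective y
    obtain ⟨a, rfl⟩ := MulAction.exists_smul_eq PSL2Z x y
    refine ⟨Φ a, ?_, hΦ a x⟩
    have h1 : Subgroup.map Φ (Subgroup.closure {Sp, Up}) = Subgroup.closure {Φ Up, Φ Sp} := by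
      rw [MonoidHom.map_closure, Set.image_pair, Set.pair_comm]
    rw [← h1, gen_top]
    exact ⟨a, trivial, rfl⟩

lemma compat_rel {n : ℕ} {M M' : Hypermap n} {Γ Γ' : Subgroup PSL2Z} (h : Compat M Γ)
    (h' : Compat M' Γ') : HypermapEquiv M M' ↔ SubgroupConj Γ Γ' := by
  obtain ⟨e, hu, hs⟩ := h
  obtain ⟨e', hu', hs'⟩ := h'
  constructor
  · rintro ⟨ψ, h1, h2⟩
    let F : PSL2Z ⧸ Γ ≃ PSL2Z ⧸ Γ' := (e.trans ψ).trans e'.symm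
    have FU : ∀ x, F (Up • x) = Up • F x := by
      intro x; apply e'.injective; simp [F, hu, hu', h1]
    have FS : ∀ x, F (Sp • x) = Sp • F x := by
      intro x; apply e'.injective; simp [F, hs, hs', h2]
    have FF : ∀ (a : PSL2Z) x, F (a • x) = a • F x := by
      intro a
      have ha : a ∈ Subgroup.closure {Sp, Up} := gen_top ▸ Subgroup.mem_top a
      induction ha using Subgroup.closure_induction with
      | mem y hy => rcases hy with rfl | rfl; exacts [FS, FU]
      | one => simp
      | mul a b _ _ iha ihb => intro x; rw [mul_smul, mul_smul, iha, ihb]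
      | inv a _ ih => intro x; rw [eq_inv_smul_iff, ← ih, smul_inv_smul]
    obtain ⟨g, hg⟩ := QuotientGroup.mk_surjective (F ((1 : PSL2Z) : PSL2Z ⧸ Γ))
    have key : ∀ a, a ∈ Γ ↔ g⁻¹ * a * g ∈ Γ' := by
      intro a
      rw [← fix_iff, hg, ← FF, F.injective.eq_iff, fix_iff]
      simp
    refine ⟨g⁻¹, ?_⟩
    ext x
    simp only [Subgroup.mem_map, MulEquiv.coe_toMonoidHom, MulAut.conj_apply, inv_inv]
    constructor
    · rintro ⟨a, ha, rfl⟩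
      exact (key a).1 ha
    · intro hx
      have : g⁻¹ * (g * x * g⁻¹) * g = x := by group
      exact ⟨g * x * g⁻¹, (key _).2 (by rwa [this]), this⟩
  · rintro ⟨g, rfl⟩
    have hm : ∀ a b : PSL2Z, (a * g⁻¹)⁻¹ * (b * g⁻¹) ∈
        Subgroup.map (MulAut.conj g).toMonoidHom Γ ↔ a⁻¹ * b ∈ Γ := by
      intro a b
      have : (a * g⁻¹)⁻¹ * (b * g⁻¹) = (MulAut.conj g).toMonoidHom (a⁻¹ * b) := by
        simp only [MulEquiv.coe_toMonoidHom, MulAut.conj_apply]; group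
      rw [this, Subgroup.mem_map_iff_mem]
      exact (MulAut.conj g).injective
    let F : PSL2Z ⧸ Γ ≃ PSL2Z ⧸ Subgroup.map (MulAut.conj g).toMonoidHom Γ :=
      Quotient.congr (Equiv.mulRight g⁻¹) (by
        intro a b
        change QuotientGroup.leftRel _ _ _ ↔ QuotientGroup.leftRel _ _ _
        rw [QuotientGroup.leftRel_apply, QuotientGroup.leftRel_apply]
        exact (hm a b).symm)
    have FF : ∀ (a : PSL2Z) x, F (a • x) = a • F x := by
      intro a x
      obtain ⟨b, rfl⟩ := QuotientGroup.mk_surjective x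
      change ((a * b * g⁻¹ : PSL2Z) : PSL2Z ⧸ Subgroup.map (MulAut.conj g).toMonoidHom Γ) =
        ((a * (b * g⁻¹) : PSL2Z) : PSL2Z ⧸ Subgroup.map (MulAut.conj g).toMonoidHom Γ)
      rw [mul_assoc]
    refine ⟨(e.symm.trans F).trans e', ?_, ?_⟩
    · intro x
      obtain ⟨x, rfl⟩ := e.surjective x
      rw [← hu]
      change e' (F (e.symm (e (Up • x)))) = M'.sigma (e' (F (e.symm (e x))))
      rw [e.symm_apply_apply, e.symm_apply_apply, FF, hu']
    · intro x
      obtain ⟨x, rfl⟩ := e.surjective x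
      rw [← hs]
      change e' (F (e.symm (e (Sp • x)))) = M'.alpha (e' (F (e.symm (e x))))
      rw [e.symm_apply_apply, e.symm_apply_apply, FF, hs']

lemma subgroupConj_equivalence {G : Type*} [Group G] :
    Equivalence (SubgroupConj : Subgroup G → Subgroup G → Prop) := by
  have hmul : ∀ (g h : G) (H : Subgroup G), Subgroup.map (MulAut.conj g).toMonoidHom
      (Subgroup.map (MulAut.conj h).toMonoidHom H) =
      Subgroup.map (MulAut.conj (g * h)).toMonoidHom H := by
    intro g h H
    rw [Subgroup.map_map, map_mul]; rfl
  have hone : ∀ H : Subgroup G, Subgroup.map (MulAut.conj (1 : G)).toMonoidHom H = H := by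
    intro H
    rw [map_one]; exact Subgroup.map_id H
  refine ⟨fun H => ⟨1, hone H⟩, ?_, ?_⟩
  · rintro H _ ⟨g, rfl⟩
    exact ⟨g⁻¹, by rw [hmul, inv_mul_cancel, hone]⟩
  · rintro H _ _ ⟨g, rfl⟩ ⟨h, rfl⟩
    exact ⟨h * g, (hmul _ _ _).symm⟩

lemma card_quot_eq {A B : Type*} {r : A → A → Prop} {s : B → B → Prop} (hs : Equivalence s)
    (F : A → B) (hF : ∀ a b, r a b ↔ s (F a) (F b)) (hsurj : ∀ b, ∃ a, s (F a) b) :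
    Nat.card (Quot s) = Nat.card (Quot r) := by
  symm
  refine Nat.card_congr (Equiv.ofBijective (Quot.map F fun a b h => (hF a b).1 h) ⟨?_, ?_⟩)
  · rintro ⟨a⟩ ⟨b⟩ h
    exact Quot.sound ((hF a b).2 ((hs.quot_mk_eq_iff _ _).1 h))
  · rintro ⟨b⟩
    obtain ⟨a, ha⟩ := hsurj b
    exact ⟨Quot.mk _ a, Quot.sound ha⟩

/-- The number of conjugacy classes of torsion-free genus-zero index-`n` subgroups of
`PSL(2,ℤ)` equals the number of equivalence classes of size-`n` hypermaps `(σ, α)`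
with `σ, α` fixed-point free and with
`(cycles of σ) + (cycles of α) + (cycles of σα) = n + 2`. -/
theorem count_tf_genus_zero_eq_hypermaps (n : ℕ) (hn : 1 ≤ n) :
    countClasses (fun Γ => Γ.index = n ∧ GenusZero Γ ∧ TorsionFree Γ) =
    Nat.card (Quot fun A B : {M : Hypermap n //
        (∀ x, M.sigma x ≠ x) ∧ (∀ x, M.alpha x ≠ x) ∧
        permCycles M.sigma + permCycles M.alpha + permCycles (M.sigma * M.alpha) = n + 2} =>
      HypermapEquiv A.1 B.1) := by
  choose Γ hΓ using fun M : Hypermap n => exists_compat_of_hypermap hn M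
  unfold countClasses
  refine card_quot_eq ?_ (fun M => ⟨Γ M.1, (hΓ M.1).index, (hΓ M.1).genus.2 M.2.2.2,
    (hΓ M.1).tf.2 ⟨M.2.1, M.2.2.1⟩⟩) ?_ ?_
  · exact subgroupConj_equivalence.comap Subtype.val
  · intro A B
    exact compat_rel (hΓ A.1) (hΓ B.1)
  · rintro ⟨Δ, hi, hg, ht⟩
    obtain ⟨M, hM⟩ := exists_compat_of_subgroup hn Δ hi
    refine ⟨⟨M, (hM.tf.1 ht).1, (hM.tf.1 ht).2, hM.genus.1 hg⟩, ?_⟩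
    refine (compat_rel (hΓ M) hM).1 ⟨1, fun _ => rfl, fun _ => rfl⟩
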